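/- Let ι be a finite type, η > 0, U a positive integer, and let C be a convex set of functions q : ι → ℝ such that every q ∈ C satisfies q i > 0 for all i. Let l̂_1,…,l̂_U : ι → ℝ be nonnegative, and let q̂_1,…,q̂_{U+1} : ι → ℝ satisfy: q̂_u i > 0 for all u and i; for each u ∈ {1,…,U}, setting q̃_{u+1} i = q̂_u i · exp(−η · l̂_u i), the vector q̂_{u+1} belongs to C and minimizes D(·‖q̃_{u+1}) over C (i.e., D(q̂_{u+1}‖q̃_{u+1}) ≤ D(p‖q̃_{u+1}) for all p ∈ C). Then for every q ∈ C, ∑_{u=1}^{U} ∑_i (q̃_{u+1} i − q i) · l̂_u i ≤ D(q‖q̂_1) / η. -/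

import Mathlib

/-- The unnormalized relative entropy
`D(q‖q') = ∑ i, q i * log (q i / q' i) - ∑ i, (q i - q' i)`. -/
noncomputable def unnormalizedRelEnt {ι : Type*} [Fintype ι] (q q' : ι → ℝ) : ℝ :=
  ∑ i, q i * Real.log (q i / q' i) - ∑ i, (q i - q' i)

lemma relEnt_eq {ι : Type*} [Fintype ι] (q r : ι → ℝ) (hq : ∀ i, 0 < q i) (hr : ∀ i, 0 < r i) :
    unnormalizedRelEnt q r
      = ∑ i, (q i * (Real.log (q i) - Real.log (r i)) - (q i - r i)) := by
  unfold unnormalizedRelEnt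
  rw [← Finset.sum_sub_distrib]
  refine Finset.sum_congr rfl fun i _ => ?_
  rw [Real.log_div (hq i).ne' (hr i).ne']

lemma relEnt_nonneg {ι : Type*} [Fintype ι] (q r : ι → ℝ) (hq : ∀ i, 0 < q i)
    (hr : ∀ i, 0 < r i) : 0 ≤ unnormalizedRelEnt q r := by
  rw [relEnt_eq q r hq hr]
  refine Finset.sum_nonneg fun i _ => ?_
  have h := Real.log_le_sub_one_of_pos (div_pos (hr i) (hq i))
  rw [Real.log_div (hr i).ne' (hq i).ne'] at h
  have h2 := mul_le_mul_of_nonneg_left h (hq i).le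
  have h3 : q i * (r i / q i - 1) = r i - q i := by
    have := (hq i).ne'
    field_simp
  linarith

lemma relEnt_three {ι : Type*} [Fintype ι] (q p r : ι → ℝ) (hq : ∀ i, 0 < q i)
    (hp : ∀ i, 0 < p i) (hr : ∀ i, 0 < r i) :
    unnormalizedRelEnt q r = unnormalizedRelEnt q p + unnormalizedRelEnt p r
      + ∑ i, (q i - p i) * (Real.log (p i) - Real.log (r i)) := by
  rw [relEnt_eq q r hq hr, relEnt_eq q p hq hp, relEnt_eq p r hp hr,
    ← Finset.sum_add_distrib, ← Finset.sum_add_distrib]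
  exact Finset.sum_congr rfl fun i _ => by ring

lemma relEnt_first_order {ι : Type*} [Fintype ι] (C : Set (ι → ℝ)) (hC : Convex ℝ C)
    (hCpos : ∀ p ∈ C, ∀ i, 0 < p i) (p r q : ι → ℝ) (hr : ∀ i, 0 < r i) (hp : p ∈ C)
    (hq : q ∈ C) (hmin : ∀ x ∈ C, unnormalizedRelEnt p r ≤ unnormalizedRelEnt x r) :
    0 ≤ ∑ i, (q i - p i) * (Real.log (p i) - Real.log (r i)) := by
  let F : ℝ → ℝ := fun t =>
    ∑ i, (q i - p i) * (Real.log (p i + t * (q i - p i)) - Real.log (r i))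
  have hF : ContinuousAt F 0 := by
    refine tendsto_finsetSum _ fun i _ => ?_
    have hne : p i + 0 * (q i - p i) ≠ 0 := by
      have := (hCpos p hp i).ne'
      simpa using this
    have h1 : ContinuousAt (fun t : ℝ => (q i - p i) *
        (Real.log (p i + t * (q i - p i)) - Real.log (r i))) 0 := by
      refine continuousAt_const.mul (ContinuousAt.sub (ContinuousAt.log ?_ hne) continuousAt_const)
      fun_prop
    exact h1
  have hlim : Filter.Tendsto F (nhdsWithin 0 (Set.Ioi 0)) (nhds (F 0)) :=
    hF.tendsto.mono_left nhdsWithin_le_nhds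
  have hev : ∀ᶠ t in nhdsWithin (0 : ℝ) (Set.Ioi 0), 0 ≤ F t := by
    filter_upwards [Ioo_mem_nhdsGT (zero_lt_one' ℝ)] with t ht
    have hx : (fun i => p i + t * (q i - p i)) ∈ C := by
      have := hC hp hq (by linarith [ht.2] : (0 : ℝ) ≤ 1 - t) ht.1.le (by ring)
      convert this using 1
      funext i
      simp only [Pi.add_apply, Pi.smul_apply, smul_eq_mul]
      ring
    have h3 := relEnt_three p _ r (hCpos p hp) (hCpos _ hx) hr
    have h4 := hmin _ hx
    have h5 := relEnt_nonneg p _ (hCpos p hp) (hCpos _ hx)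
    have h6 : ∑ i, (p i - (p i + t * (q i - p i))) *
        (Real.log (p i + t * (q i - p i)) - Real.log (r i)) = - (t * F t) := by
      simp only [F]
      rw [Finset.mul_sum, ← Finset.sum_neg_distrib]
      exact Finset.sum_congr rfl fun i _ => by ring
    rw [h6] at h3
    have h7 : 0 ≤ t * F t := by linarith
    exact nonneg_of_mul_nonneg_right h7 ht.1
  have := ge_of_tendsto hlim hev
  simpa [F] using this

lemma omd_step {ι : Type*} [Fintype ι] (η : ℝ) (a l q : ι → ℝ) (ha : ∀ i, 0 < a i)
    (hq : ∀ i, 0 < q i) :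
    η * ∑ i, (a i * Real.exp (-η * l i) - q i) * l i
      ≤ unnormalizedRelEnt q a
        - unnormalizedRelEnt q (fun i => a i * Real.exp (-η * l i)) := by
  rw [relEnt_eq q a hq ha, relEnt_eq q _ hq (fun i => mul_pos (ha i) (Real.exp_pos _)),
    ← Finset.sum_sub_distrib, Finset.mul_sum]
  refine Finset.sum_le_sum fun i _ => ?_
  rw [Real.log_mul (ha i).ne' (Real.exp_pos _).ne', Real.log_exp]
  have h1 : Real.exp (-η * l i) * (η * l i + 1) ≤ 1 := by
    have := mul_le_mul_of_nonneg_left (Real.add_one_le_exp (η * l i))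
      (Real.exp_pos (-η * l i)).le
    rw [← Real.exp_add] at this
    simpa using this
  have h2 := mul_le_mul_of_nonneg_left h1 (ha i).le
  linarith

/-- Telescoped online-mirror-descent bound (equation (25) in Step-2-ii of the
proof of Theorem 3): the exponential updates `q̃_{u+1}` together with their
Bregman projections `q̂_{u+1}` onto the convex set `C` satisfy
`∑_u ⟨q̃_{u+1} - q, l̂_u⟩ ≤ D(q‖q̂_1)/η` for every `q ∈ C`. -/
theorem omd_telescoped_bound
    {ι : Type*} [Fintype ι] (η : ℝ) (hη : 0 < η) (U : ℕ) (hU : 0 < U)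
    (C : Set (ι → ℝ)) (hCconv : Convex ℝ C) (hCpos : ∀ p ∈ C, ∀ i, 0 < p i)
    (lhat : Fin U → ι → ℝ) (hlhat : ∀ u i, 0 ≤ lhat u i)
    (qhat : Fin (U + 1) → ι → ℝ) (hqhatpos : ∀ u i, 0 < qhat u i)
    (hmem : ∀ u : Fin U, qhat u.succ ∈ C)
    (hproj : ∀ u : Fin U, ∀ p ∈ C,
      unnormalizedRelEnt (qhat u.succ)
          (fun i => qhat u.castSucc i * Real.exp (-η * lhat u i))
        ≤ unnormalizedRelEnt p
          (fun i => qhat u.castSucc i * Real.exp (-η * lhat u i)))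
    (q : ι → ℝ) (hq : q ∈ C) :
    ∑ u : Fin U, ∑ i, ((qhat u.castSucc i * Real.exp (-η * lhat u i)) - q i) * lhat u i
      ≤ unnormalizedRelEnt q (qhat 0) / η := by
  have hstep : ∀ u : Fin U,
      η * ∑ i, ((qhat u.castSucc i * Real.exp (-η * lhat u i)) - q i) * lhat u i
        ≤ unnormalizedRelEnt q (qhat u.castSucc) - unnormalizedRelEnt q (qhat u.succ) := by
    intro u
    have hr : ∀ i, 0 < qhat u.castSucc i * Real.exp (-η * lhat u i) :=
      fun i => mul_pos (hqhatpos _ i) (Real.exp_pos _)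
    have h1 := omd_step η (qhat u.castSucc) (lhat u) q (hqhatpos _) (hCpos q hq)
    have h2 := relEnt_first_order C hCconv hCpos _ _ q hr (hmem u) hq (hproj u)
    have h3 := relEnt_three q (qhat u.succ) _ (hCpos q hq) (hqhatpos _) hr
    have h4 := relEnt_nonneg (qhat u.succ) _ (hqhatpos _) hr
    linarith
  have hsum := Finset.sum_le_sum fun u (_ : u ∈ Finset.univ) => hstep u
  rw [← Finset.mul_sum, Finset.sum_sub_distrib] at hsum
  have e1 := Fin.sum_univ_castSucc fun u => unnormalizedRelEnt q (qhat u)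
  have e2 := Fin.sum_univ_succ fun u => unnormalizedRelEnt q (qhat u)
  have h5 := relEnt_nonneg q (qhat (Fin.last U)) (hCpos q hq) (hqhatpos _)
  rw [le_div_iff₀ hη, mul_comm]
  linarith
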